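/- Let 0 < α < 1, t > 0, let k ≥ 1 be an integer and let x > π(2k+1)/2. Then a_k(x,t) ≤ (x/((2k−1)π)) · ∫_{1−(π(2k+1)/(2x))²}^{1−(π(2k−1)/(2x))²} E_α(t^α ρ) dρ. -/

import Mathlib

open Real MeasureTheory

/-- The Mittag-Leffler function `E_α(r) = ∑ r^k / Γ(1+kα)`. -/
noncomputable def mittagLeffler (α r : ℝ) : ℝ :=
  ∑' k : ℕ, r ^ k / Real.Gamma (1 + k * α)

/-- The coefficients `a_k(x,t)` obtained by splitting the Fourier integral of the
fundamental solution over the intervals where `cos (xξ)` has a fixed sign. -/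
noncomputable def aCoeff (α t x : ℝ) (k : ℕ) : ℝ :=
  if k = 0 then
    ∫ ξ in (0 : ℝ)..(π / (2 * x)),
      mittagLeffler α ((1 - ξ ^ 2) * t ^ α) * Real.cos (x * ξ)
  else
    (-1 : ℝ) ^ k *
      ∫ ξ in (π * (2 * (k : ℝ) - 1) / (2 * x))..(π * (2 * (k : ℝ) + 1) / (2 * x)),
        mittagLeffler α ((1 - ξ ^ 2) * t ^ α) * Real.cos (x * ξ)

/-- A lower bound showing that `Γ` outgrows every exponential. -/
lemma rpow_mul_exp_neg_le_Gamma {s R : ℝ} (hs : 0 ≤ s) (hR : 0 < R) :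
    R ^ s * Real.exp (-R) ≤ Real.Gamma (1 + s) := by
  have hint : IntegrableOn (fun y : ℝ => Real.exp (-y) * y ^ (1 + s - 1)) (Set.Ioi 0) :=
    Real.GammaIntegral_convergent (by linarith)
  have hsub : Set.Ioi R ⊆ Set.Ioi (0 : ℝ) := Set.Ioi_subset_Ioi hR.le
  rw [Real.Gamma_eq_integral (by linarith), ← integral_exp_neg_Ioi R, ← integral_const_mul]
  refine le_trans ?_ (setIntegral_mono_set hint ?_ hsub.eventuallyLE)
  · refine setIntegral_mono_on ?_ (hint.mono_set hsub) measurableSet_Ioi fun y hy => ?_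
    · exact (integrableOn_exp_neg_Ioi R).const_mul _
    · rw [mul_comm, add_sub_cancel_left]
      gcongr
      exact le_of_lt hy
  · filter_upwards [ae_restrict_mem measurableSet_Ioi] with y hy
    have hy' : (0 : ℝ) < y := hy
    simp only [Pi.zero_apply]
    positivity

lemma exists_summable_mittagLeffler_bound {α : ℝ} (hα : 0 < α) {M : ℝ} (hM : 0 < M) :
    ∃ u : ℕ → ℝ, Summable u ∧
      ∀ (k : ℕ) (r : ℝ), |r| ≤ M → ‖r ^ k / Real.Gamma (1 + k * α)‖ ≤ u k := by
  set R : ℝ := (2 * M) ^ α⁻¹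
  have hR0 : 0 < R := by positivity
  have hRα : R ^ α = 2 * M := Real.rpow_inv_rpow (by positivity) hα.ne'
  refine ⟨fun k => Real.exp R * (1 / 2 : ℝ) ^ k, summable_geometric_two.mul_left _,
    fun k r hr => ?_⟩
  have hΓ : (2 * M) ^ k * Real.exp (-R) ≤ Real.Gamma (1 + k * α) := by
    have h := rpow_mul_exp_neg_le_Gamma (s := k * α) (by positivity) hR0
    rwa [mul_comm (k : ℝ) α, Real.rpow_mul hR0.le, hRα, Real.rpow_natCast,
      mul_comm α (k : ℝ)] at h
  have hΓ0 : 0 < Real.Gamma (1 + k * α) := Real.Gamma_pos_of_pos (by positivity)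
  rw [norm_div, norm_pow, Real.norm_eq_abs, Real.norm_eq_abs, abs_of_pos hΓ0, div_le_iff₀ hΓ0]
  calc |r| ^ k ≤ M ^ k := by gcongr
    _ = Real.exp R * (1 / 2 : ℝ) ^ k * ((2 * M) ^ k * Real.exp (-R)) := by
      have he : Real.exp R * Real.exp (-R) = 1 := by rw [← Real.exp_add]; simp
      have hp : (1 / 2 : ℝ) ^ k * (2 * M) ^ k = M ^ k := by
        rw [← mul_pow]; congr 1; ring
      linear_combination (-(M ^ k)) * he - Real.exp R * Real.exp (-R) * hp
    _ ≤ _ := by gcongr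

lemma continuous_mittagLeffler {α : ℝ} (hα : 0 < α) : Continuous (mittagLeffler α) := by
  refine continuous_iff_continuousAt.2 fun r => ?_
  obtain ⟨u, hu, hb⟩ := exists_summable_mittagLeffler_bound hα (M := |r| + 1) (by positivity)
  have hcont : ContinuousOn (mittagLeffler α) (Metric.closedBall 0 (|r| + 1)) :=
    continuousOn_tsum (fun k => by fun_prop) hu fun k y hy =>
      hb k y (by simpa using hy)
  refine hcont.continuousAt (Filter.mem_of_superset
    (Metric.isOpen_ball.mem_nhds ?_) Metric.ball_subset_closedBall)
  simp

lemma mittagLeffler_nonneg {α r : ℝ} (hα : 0 < α) (hr : 0 ≤ r) : 0 ≤ mittagLeffler α r :=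
  tsum_nonneg fun k =>
    div_nonneg (pow_nonneg hr k) (Real.Gamma_pos_of_pos (by positivity)).le

theorem aCoeff_upper_bound (α t x : ℝ) (k : ℕ) (hα : 0 < α) (hα1 : α < 1) (ht : 0 < t)
    (hk : 1 ≤ k) (hx : π * (2 * (k : ℝ) + 1) / 2 < x) :
    aCoeff α t x k ≤
      (x / ((2 * (k : ℝ) - 1) * π)) *
        ∫ ρ in (1 - (π * (2 * (k : ℝ) + 1) / (2 * x)) ^ 2)..(1 -
            (π * (2 * (k : ℝ) - 1) / (2 * x)) ^ 2),
          mittagLeffler α (t ^ α * ρ) := by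
  have hk' : (1 : ℝ) ≤ k := by exact_mod_cast hk
  have hx0 : 0 < x := lt_trans (by positivity) hx
  have hk1 : 0 < 2 * (k : ℝ) - 1 := by linarith
  have hE := continuous_mittagLeffler hα
  rw [aCoeff, if_neg (by omega)]
  have hconst : x / ((2 * (k : ℝ) - 1) * π) * (2 * (π * (2 * (k : ℝ) - 1) / (2 * x))) = 1 := by
    field_simp
  have hb1 : π * (2 * (k : ℝ) + 1) / (2 * x) ≤ 1 := by
    rw [div_le_one (by positivity)]; linarith
  have ha0 : 0 < π * (2 * (k : ℝ) - 1) / (2 * x) := by positivity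
  have hab : π * (2 * (k : ℝ) - 1) / (2 * x) ≤ π * (2 * (k : ℝ) + 1) / (2 * x) := by
    gcongr; linarith
  have hc0 : 0 < x / ((2 * (k : ℝ) - 1) * π) := by positivity
  generalize π * (2 * (k : ℝ) - 1) / (2 * x) = a at *
  generalize π * (2 * (k : ℝ) + 1) / (2 * x) = b at *
  generalize x / ((2 * (k : ℝ) - 1) * π) = c at *
  have hsubst : ∫ ρ in (1 - b ^ 2)..(1 - a ^ 2), mittagLeffler α (t ^ α * ρ) =
      ∫ ξ in a..b, mittagLeffler α ((1 - ξ ^ 2) * t ^ α) * (2 * ξ) := by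
    have h := intervalIntegral.integral_comp_mul_deriv (a := a) (b := b)
      (f := fun ξ : ℝ => 1 - ξ ^ 2) (f' := fun ξ => -(2 * ξ))
      (g := fun ρ => mittagLeffler α (t ^ α * ρ))
      (fun ξ _ => by simpa using (hasDerivAt_pow 2 ξ).const_sub 1)
      (by fun_prop) (by fun_prop)
    rw [intervalIntegral.integral_symm, ← h, ← intervalIntegral.integral_neg]
    refine intervalIntegral.integral_congr fun ξ _ => ?_
    simp only [Function.comp_apply, mul_comm (t ^ α)]
    ring
  rw [hsubst, ← intervalIntegral.integral_const_mul, ← intervalIntegral.integral_const_mul]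
  refine intervalIntegral.integral_mono_on hab
    (Continuous.intervalIntegrable (by fun_prop) _ _)
    (Continuous.intervalIntegrable (by fun_prop) _ _) fun ξ hξ => ?_
  have hpos : 0 ≤ mittagLeffler α ((1 - ξ ^ 2) * t ^ α) :=
    mittagLeffler_nonneg hα (mul_nonneg (by nlinarith [hξ.1, hξ.2]) (by positivity))
  have hcos : (-1 : ℝ) ^ k * Real.cos (x * ξ) ≤ 1 :=
    (le_abs_self _).trans (by simpa [abs_mul] using Real.abs_cos_le_one (x * ξ))
  have hcξ : 1 ≤ c * (2 * ξ) := by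
    rw [← hconst]
    gcongr
    exact hξ.1
  calc _ = mittagLeffler α ((1 - ξ ^ 2) * t ^ α) * ((-1 : ℝ) ^ k * Real.cos (x * ξ)) := by ring
    _ ≤ mittagLeffler α ((1 - ξ ^ 2) * t ^ α) * (c * (2 * ξ)) :=
      mul_le_mul_of_nonneg_left (hcos.trans hcξ) hpos
    _ = _ := by ring
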